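/- Let p ≥ 1 and let g : ℝ^n × ℝ^m → ℝ be p times continuously differentiable with L_p-Lipschitz p-th derivative: ‖∇^p g(z₁) − ∇^p g(z₂)‖₂ ≤ L_p‖z₁ − z₂‖₂ for all z₁,z₂. Let Φ_{z,p}(ẑ) = Σ_{i=0}^p (1/i!)∇^i g(z)[ẑ − z]^i be the p-th order Taylor polynomial of g at z. Then for all z = (x,y) and ẑ = (x̂,ŷ) in ℝ^n × ℝ^m, the gradients with respect to the first block satisfy ‖∇_x g(ẑ) − ∇_x Φ_{z,p}(ẑ)‖₂ ≤ (L_p (√2)^{p−1}/p!) · ‖ẑ − z‖₂^p, and similarly for the gradient with respect to the second block. -/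

import Mathlib

/-- The point of `ℝⁿ × ℝᵐ` (with the Euclidean/`L²` product structure) with coordinates
`(x, y)`. -/
noncomputable def mkZ {n m : ℕ} (x : EuclideanSpace ℝ (Fin n)) (y : EuclideanSpace ℝ (Fin m)) :
    WithLp 2 (EuclideanSpace ℝ (Fin n) × EuclideanSpace ℝ (Fin m)) :=
  (WithLp.equiv 2 (EuclideanSpace ℝ (Fin n) × EuclideanSpace ℝ (Fin m))).symm (x, y)

/-- The `p`-th order Taylor polynomial `Φ_{z,p}(ẑ) = Σ_{i=0}^p (1/i!) ∇ⁱ g(z)[ẑ − z]ⁱ`. -/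
noncomputable def taylorPoly {n m : ℕ} (p : ℕ)
    (g : WithLp 2 (EuclideanSpace ℝ (Fin n) × EuclideanSpace ℝ (Fin m)) → ℝ)
    (z zh : WithLp 2 (EuclideanSpace ℝ (Fin n) × EuclideanSpace ℝ (Fin m))) : ℝ :=
  ∑ i ∈ Finset.range (p + 1),
    (1 / (Nat.factorial i : ℝ)) * iteratedFDeriv ℝ i g z (fun _ => zh - z)

/-- Gradient with respect to the first block of variables. -/
noncomputable def gradXZ {n m : ℕ}
    (f : WithLp 2 (EuclideanSpace ℝ (Fin n) × EuclideanSpace ℝ (Fin m)) → ℝ)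
    (x : EuclideanSpace ℝ (Fin n)) (y : EuclideanSpace ℝ (Fin m)) :
    EuclideanSpace ℝ (Fin n) :=
  gradient (fun x' => f (mkZ x' y)) x

/-- Gradient with respect to the second block of variables. -/
noncomputable def gradYZ {n m : ℕ}
    (f : WithLp 2 (EuclideanSpace ℝ (Fin n) × EuclideanSpace ℝ (Fin m)) → ℝ)
    (x : EuclideanSpace ℝ (Fin n)) (y : EuclideanSpace ℝ (Fin m)) :
    EuclideanSpace ℝ (Fin m) :=
  gradient (fun y' => f (mkZ x y')) y

/-!
Since iterated derivatives are symmetric, differentiating the `p`-th order Taylor polynomial of `g`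
at `z` gives the Taylor polynomial of order `p - 1` of `fderiv ℝ g` at `z`. The `(p - 1)`-st
derivative of `fderiv ℝ g` is Lipschitz with the same constant `L`, so the integral form of the
Taylor remainder bounds the difference of the full derivatives by `L / p! * ‖ẑ - z‖ ^ p`. The block
gradients arise by restricting to the slices `x ↦ (x, ŷ)` and `y ↦ (x̂, y)`, which are isometries
and so do not increase the norm; the factor `√2 ^ (p - 1) ≥ 1` is slack.
-/

open Function Set Topology
open scoped Nat Gradient ENNReal

section IteratedDerivatives

variable {𝕜 E F : Type*} [NontriviallyNormedField 𝕜]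
  [NormedAddCommGroup E] [NormedSpace 𝕜 E] [NormedAddCommGroup F] [NormedSpace 𝕜 F]
  {f : E → F} {x : E} {n : ℕ}

theorem iteratedFDeriv_add_two_apply_left (hf : ContDiffAt 𝕜 (n + 2) f x) (v : Fin (n + 2) → E) :
    iteratedFDeriv 𝕜 (n + 2) f x v =
      fderiv 𝕜 (fderiv 𝕜 (iteratedFDeriv 𝕜 n f)) x (v 0) (v 1) (Fin.tail (Fin.tail v)) := by
  have hdiff : DifferentiableAt 𝕜 (iteratedFDeriv 𝕜 (n + 1) f) x :=
    hf.differentiableAt_iteratedFDeriv (by norm_cast; omega)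
  have hfderiv : ContDiffAt 𝕜 1 (fderiv 𝕜 (iteratedFDeriv 𝕜 n f)) x :=
    (hf.iteratedFDeriv_right (m := 2) (by norm_cast; omega)).fderiv_right (by norm_num)
  have happly := ((hfderiv.differentiableAt one_ne_zero).hasFDerivAt.clm_apply
    (hasFDerivAt_const (v 1) x)).continuousMultilinear_apply_const (Fin.tail (Fin.tail v))
  rw [hdiff.iteratedFDeriv_succ_apply_left']
  change fderiv 𝕜 (fun y ↦ fderiv 𝕜 (iteratedFDeriv 𝕜 n f) y (v 1) (Fin.tail (Fin.tail v))) x (v 0)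
    = _
  rw [happly.fderiv]
  simp

theorem norm_iteratedFDeriv_fderiv_sub (y : E) :
    ‖iteratedFDeriv 𝕜 n (fderiv 𝕜 f) x - iteratedFDeriv 𝕜 n (fderiv 𝕜 f) y‖ =
      ‖iteratedFDeriv 𝕜 (n + 1) f x - iteratedFDeriv 𝕜 (n + 1) f y‖ := by
  rw [iteratedFDeriv_succ_eq_comp_right, iteratedFDeriv_succ_eq_comp_right, comp_apply, comp_apply,
    ← LinearIsometryEquiv.map_sub, LinearIsometryEquiv.norm_map]

end IteratedDerivatives

section SymmetryOfDerivatives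

variable {𝕜 E F : Type*} [RCLike 𝕜]
  [NormedAddCommGroup E] [NormedSpace 𝕜 E] [NormedAddCommGroup F] [NormedSpace 𝕜 F]
  {f : E → F} {x : E}

theorem iteratedFDeriv_comp_swap_zero_one {n : ℕ} (hf : ContDiffAt 𝕜 (n + 2) f x)
    (v : Fin (n + 2) → E) :
    iteratedFDeriv 𝕜 (n + 2) f x (v ∘ Equiv.swap 0 1) = iteratedFDeriv 𝕜 (n + 2) f x v := by
  have hsymm : IsSymmSndFDerivAt 𝕜 (iteratedFDeriv 𝕜 n f) x :=
    (hf.iteratedFDeriv_right (m := 2) (by norm_cast; omega)).isSymmSndFDerivAt (by simp)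
  have htail : Fin.tail (Fin.tail (v ∘ Equiv.swap 0 1)) = Fin.tail (Fin.tail v) :=
    funext fun j ↦ congrArg v (Equiv.swap_apply_of_ne_of_ne (Fin.succ_ne_zero _)
      ((Fin.succ_injective _).ne (Fin.succ_ne_zero j)))
  rw [iteratedFDeriv_add_two_apply_left hf, iteratedFDeriv_add_two_apply_left hf, htail]
  simp only [comp_apply, Equiv.swap_apply_left, Equiv.swap_apply_right, hsymm.eq (v 1)]

theorem iteratedFDeriv_comp_swap_castSucc_succ {n : ℕ} (hf : ContDiffAt 𝕜 (n + 1) f x)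
    (v : Fin (n + 1) → E) (i : Fin n) :
    iteratedFDeriv 𝕜 (n + 1) f x (v ∘ Equiv.swap i.castSucc i.succ) =
      iteratedFDeriv 𝕜 (n + 1) f x v := by
  induction n generalizing x with
  | zero => exact i.elim0
  | succ n ih =>
    induction i using Fin.cases with
    | zero => exact iteratedFDeriv_comp_swap_zero_one (hf.of_le (by norm_cast)) v
    | succ i =>
      have hdiff : DifferentiableAt 𝕜 (iteratedFDeriv 𝕜 (n + 1) f) x :=
        hf.differentiableAt_iteratedFDeriv (by norm_cast; omega)
      have hzero : Equiv.swap i.succ.castSucc i.succ.succ 0 = 0 := by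
        rw [← Fin.succ_castSucc]
        exact Equiv.swap_apply_of_ne_of_ne (Fin.succ_ne_zero _).symm (Fin.succ_ne_zero _).symm
      have htail : Fin.tail (v ∘ Equiv.swap i.succ.castSucc i.succ.succ) =
          Fin.tail v ∘ Equiv.swap i.castSucc i.succ := by
        funext j
        simp only [Fin.tail, comp_apply, ← Fin.succ_castSucc,
          (Fin.succ_injective _).swap_apply]
      have heq : (fun y ↦ iteratedFDeriv 𝕜 (n + 1) f y
            (Fin.tail v ∘ Equiv.swap i.castSucc i.succ)) =ᶠ[𝓝 x]
          fun y ↦ iteratedFDeriv 𝕜 (n + 1) f y (Fin.tail v) :=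
        (hf.eventually (mod_cast WithTop.coe_ne_top)).mono fun y hy ↦
          ih (hy.of_le (by norm_cast; omega)) (Fin.tail v) i
      rw [hdiff.iteratedFDeriv_succ_apply_left', hdiff.iteratedFDeriv_succ_apply_left', htail,
        heq.fderiv_eq, comp_apply, hzero]

theorem iteratedFDeriv_comp_perm {n : ℕ} (hf : ContDiffAt 𝕜 n f x) (v : Fin n → E)
    (σ : Equiv.Perm (Fin n)) :
    iteratedFDeriv 𝕜 n f x (v ∘ σ) = iteratedFDeriv 𝕜 n f x v := by
  cases n with
  | zero => rw [Subsingleton.elim (v ∘ σ) v]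
  | succ n =>
    have hσ : σ ∈ Submonoid.closure (range fun i : Fin n ↦ Equiv.swap i.castSucc i.succ) :=
      Equiv.Perm.mclosure_swap_castSucc_succ n ▸ Submonoid.mem_top σ
    induction hσ using Submonoid.closure_induction generalizing v with
    | mem _ hi =>
      obtain ⟨i, rfl⟩ := hi
      exact iteratedFDeriv_comp_swap_castSucc_succ (mod_cast hf) v i
    | one => rfl
    | mul σ τ _ _ ihσ ihτ => rw [Equiv.Perm.coe_mul, ← comp_assoc, ihτ, ihσ]

theorem iteratedFDeriv_succ_apply_update_const {n : ℕ} (hf : ContDiffAt 𝕜 (n + 1) f x)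
    (h v : E) (j : Fin (n + 1)) :
    iteratedFDeriv 𝕜 (n + 1) f x (update (fun _ ↦ h) j v) =
      iteratedFDeriv 𝕜 n (fderiv 𝕜 f) x (fun _ ↦ h) v := by
  have hswap : update (fun _ ↦ h) j v =
      update (fun _ ↦ h) (Fin.last n) v ∘ Equiv.swap j (Fin.last n) := by
    rw [← Equiv.symm_swap, update_comp_equiv]
    simp [comp_def]
  rw [hswap, iteratedFDeriv_comp_perm (mod_cast hf), iteratedFDeriv_succ_apply_right,
    Fin.init_update_last, update_self]
  rfl

theorem hasFDerivAt_iteratedFDeriv_diag {n : ℕ} (hf : ContDiffAt 𝕜 (n + 1) f x) (h : E) :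
    HasFDerivAt (fun v ↦ iteratedFDeriv 𝕜 (n + 1) f x fun _ ↦ v)
      ((n + 1 : 𝕜) • iteratedFDeriv 𝕜 n (fderiv 𝕜 f) x fun _ ↦ h) h := by
  refine (HasFDerivAt.multilinear_comp (iteratedFDeriv 𝕜 (n + 1) f x)
    fun _ ↦ hasFDerivAt_id h).congr_fderiv ?_
  ext v
  simp [iteratedFDeriv_succ_apply_update_const hf, ← Nat.cast_smul_eq_nsmul 𝕜]

end SymmetryOfDerivatives

section TaylorPolynomial

/-- The Taylor polynomial of order `n` of `f` at `z`, evaluated at the point `w` (not at the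
increment `w - z`). It is vector-valued so that it also applies to `fderiv 𝕜 f`. -/
noncomputable def taylorPolynomial (𝕜 : Type*) {E F : Type*} [NontriviallyNormedField 𝕜]
    [NormedAddCommGroup E] [NormedSpace 𝕜 E] [NormedAddCommGroup F] [NormedSpace 𝕜 F]
    (n : ℕ) (f : E → F) (z w : E) : F :=
  ∑ i ∈ Finset.range (n + 1), (i ! : 𝕜)⁻¹ • iteratedFDeriv 𝕜 i f z fun _ ↦ w - z

theorem taylorPoly_eq_taylorPolynomial {n m : ℕ} (p : ℕ)
    (g : WithLp 2 (EuclideanSpace ℝ (Fin n) × EuclideanSpace ℝ (Fin m)) → ℝ)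
    (z : WithLp 2 (EuclideanSpace ℝ (Fin n) × EuclideanSpace ℝ (Fin m))) :
    taylorPoly p g z = taylorPolynomial ℝ p g z := by
  funext w
  simp only [taylorPoly, taylorPolynomial, one_div, smul_eq_mul]

theorem differentiable_taylorPolynomial {𝕜 E F : Type*} [NontriviallyNormedField 𝕜]
    [NormedAddCommGroup E] [NormedSpace 𝕜 E] [NormedAddCommGroup F] [NormedSpace 𝕜 F]
    {n : ℕ} {f : E → F} {z : E} : Differentiable 𝕜 (taylorPolynomial 𝕜 n f z) :=
  Differentiable.fun_sum fun i _ ↦ (Differentiable.comp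
    ((iteratedFDeriv 𝕜 i f z).contDiff.differentiable one_ne_zero)
    (by fun_prop : Differentiable 𝕜 fun w (_ : Fin i) ↦ w - z)).const_smul (i ! : 𝕜)⁻¹

theorem hasFDerivAt_taylorPolynomial_succ {𝕜 E F : Type*} [RCLike 𝕜]
    [NormedAddCommGroup E] [NormedSpace 𝕜 E] [NormedAddCommGroup F] [NormedSpace 𝕜 F]
    {n : ℕ} {f : E → F} {z : E} (hf : ContDiffAt 𝕜 (n + 1) f z) (w : E) :
    HasFDerivAt (taylorPolynomial 𝕜 (n + 1) f z) (taylorPolynomial 𝕜 n (fderiv 𝕜 f) z w) w := by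
  have hterm : ∀ i ∈ Finset.range (n + 1),
      HasFDerivAt (fun w ↦ ((i + 1)! : 𝕜)⁻¹ • iteratedFDeriv 𝕜 (i + 1) f z fun _ ↦ w - z)
        ((i ! : 𝕜)⁻¹ • iteratedFDeriv 𝕜 i (fderiv 𝕜 f) z fun _ ↦ w - z) w := by
    intro i hi
    have hfi : ContDiffAt 𝕜 (i + 1) f z :=
      hf.of_le (by exact_mod_cast Finset.mem_range.1 hi)
    have hdiag := ((hasFDerivAt_comp_sub z).2
      (hasFDerivAt_iteratedFDeriv_diag hfi (w - z))).const_smul ((i + 1)! : 𝕜)⁻¹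
    refine hdiag.congr_fderiv ?_
    have hi0 : (i + 1 : 𝕜) ≠ 0 := by exact_mod_cast i.succ_ne_zero
    rw [smul_smul, Nat.factorial_succ]
    push_cast
    rw [mul_inv_rev, inv_mul_cancel_right₀ hi0]
  have hsplit : taylorPolynomial 𝕜 (n + 1) f z = fun w ↦ (∑ i ∈ Finset.range (n + 1),
      ((i + 1)! : 𝕜)⁻¹ • iteratedFDeriv 𝕜 (i + 1) f z fun _ ↦ w - z) + f z := by
    funext w
    simp [taylorPolynomial, Finset.sum_range_succ' _ (n + 1)]
  rw [hsplit]
  exact (HasFDerivAt.fun_sum hterm).add_const (f z)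

end TaylorPolynomial

section LipschitzRemainder

theorem integral_one_sub_pow (n : ℕ) : ∫ t in (0 : ℝ)..1, (1 - t) ^ n = (n + 1 : ℝ)⁻¹ := by
  simp [intervalIntegral.integral_comp_sub_left (fun t : ℝ ↦ t ^ n)]

theorem integral_one_sub_pow_mul_self (n : ℕ) :
    ∫ t in (0 : ℝ)..1, (1 - t) ^ n * t = ((n + 1 : ℝ) * (n + 2))⁻¹ := by
  have hsplit : ∀ t : ℝ, (1 - t) ^ n * t = (1 - t) ^ n - (1 - t) ^ (n + 1) := fun t ↦ by ring
  simp only [hsplit]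
  rw [intervalIntegral.integral_sub (Continuous.intervalIntegrable (by fun_prop) 0 1)
    (Continuous.intervalIntegrable (by fun_prop) 0 1), integral_one_sub_pow, integral_one_sub_pow]
  push_cast
  field_simp
  ring

variable {E F : Type*} [NormedAddCommGroup E] [NormedSpace ℝ E] [NormedAddCommGroup F]
  [NormedSpace ℝ F] [CompleteSpace F] {f : E → F}

theorem sub_taylorPolynomial_eq_integral {n : ℕ} (hf : ContDiff ℝ (n + 1) f) (z w : E) :
    f w - taylorPolynomial ℝ (n + 1) f z w = (n ! : ℝ)⁻¹ • ∫ t in (0 : ℝ)..1, (1 - t) ^ n •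
      (iteratedFDeriv ℝ (n + 1) f (z + t • (w - z)) - iteratedFDeriv ℝ (n + 1) f z)
        fun _ ↦ w - z := by
  have hcont : Continuous fun t : ℝ ↦ iteratedFDeriv ℝ (n + 1) f (z + t • (w - z)) :=
    (hf.continuous_iteratedFDeriv (by norm_cast)).comp (by fun_prop)
  have htaylor := map_add_eq_sum_add_integral_iteratedFDeriv (x := z) (y := w - z)
    fun t _ ↦ hf.contDiffAt
  rw [add_sub_cancel] at htaylor
  have hint : ∀ c : ℝ → E [×(n + 1)]→L[ℝ] F, Continuous c →
      IntervalIntegrable (fun t : ℝ ↦ (1 - t) ^ n • c t fun _ ↦ w - z) MeasureTheory.volume 0 1 :=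
    fun c hc ↦ Continuous.intervalIntegrable (by fun_prop) 0 1
  have hsub : ∀ t : ℝ, (1 - t) ^ n • (iteratedFDeriv ℝ (n + 1) f (z + t • (w - z)) -
      iteratedFDeriv ℝ (n + 1) f z) (fun _ ↦ w - z) =
        (1 - t) ^ n • iteratedFDeriv ℝ (n + 1) f (z + t • (w - z)) (fun _ ↦ w - z) -
          (1 - t) ^ n • iteratedFDeriv ℝ (n + 1) f z (fun _ ↦ w - z) :=
    fun t ↦ by rw [_root_.sub_apply, smul_sub]
  simp only [hsub]
  rw [intervalIntegral.integral_sub (hint _ hcont) (hint _ continuous_const),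
    intervalIntegral.integral_smul_const, integral_one_sub_pow, htaylor, taylorPolynomial,
    Finset.sum_range_succ _ (n + 1), Nat.factorial_succ, smul_sub, smul_smul]
  push_cast
  rw [mul_inv_rev]
  abel

theorem norm_sub_taylorPolynomial_le {q : ℕ} (hf : ContDiff ℝ q f) {z : E} {L : ℝ}
    (hLip : ∀ w, ‖iteratedFDeriv ℝ q f w - iteratedFDeriv ℝ q f z‖ ≤ L * ‖w - z‖) (w : E) :
    ‖f w - taylorPolynomial ℝ q f z w‖ ≤ L / (q + 1)! * ‖w - z‖ ^ (q + 1) := by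
  cases q with
  | zero =>
    have hLip_w := hLip w
    simp only [iteratedFDeriv_zero_eq_comp, comp_apply, ← map_sub,
      LinearIsometryEquiv.norm_map] at hLip_w
    simpa [taylorPolynomial] using hLip_w
  | succ n =>
    have hpointwise : ∀ t ∈ Ioc (0 : ℝ) 1, ‖(1 - t) ^ n •
        (iteratedFDeriv ℝ (n + 1) f (z + t • (w - z)) - iteratedFDeriv ℝ (n + 1) f z)
          fun _ ↦ w - z‖ ≤ (1 - t) ^ n * t * (L * ‖w - z‖ ^ (n + 2)) := by
      intro t ht
      have hLip_t := hLip (z + t • (w - z))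
      rw [add_sub_cancel_left, norm_smul, Real.norm_of_nonneg ht.1.le] at hLip_t
      have h1t : 0 ≤ (1 - t) ^ n := pow_nonneg (sub_nonneg.2 ht.2) n
      rw [norm_smul, Real.norm_of_nonneg h1t, mul_assoc]
      refine mul_le_mul_of_nonneg_left ?_ h1t
      calc _ ≤ L * (t * ‖w - z‖) * ‖w - z‖ ^ (n + 1) :=
            (ContinuousMultilinearMap.le_of_opNorm_le hLip_t _).trans_eq (by simp)
        _ = t * (L * ‖w - z‖ ^ (n + 2)) := by ring
    have hintegral := intervalIntegral.norm_integral_le_of_norm_le zero_le_one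
      (MeasureTheory.ae_of_all MeasureTheory.volume hpointwise)
      (Continuous.intervalIntegrable (by fun_prop) 0 1)
    rw [intervalIntegral.integral_mul_const, integral_one_sub_pow_mul_self] at hintegral
    rw [sub_taylorPolynomial_eq_integral (mod_cast hf), norm_smul, norm_inv, RCLike.norm_natCast]
    refine (mul_le_mul_of_nonneg_left hintegral (by positivity)).trans_eq ?_
    rw [Nat.factorial_succ, Nat.factorial_succ]
    push_cast
    field_simp
    ring

end LipschitzRemainder

theorem norm_fderiv_sub_fderiv_taylorPolynomial_le {E F : Type*} [NormedAddCommGroup E]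
    [NormedSpace ℝ E] [NormedAddCommGroup F] [NormedSpace ℝ F] [CompleteSpace F] {p : ℕ}
    (hp : 1 ≤ p) {g : E → F} (hg : ContDiff ℝ p g) {z : E} {L : ℝ}
    (hLip : ∀ w, ‖iteratedFDeriv ℝ p g w - iteratedFDeriv ℝ p g z‖ ≤ L * ‖w - z‖) (w : E) :
    ‖fderiv ℝ g w - fderiv ℝ (taylorPolynomial ℝ p g z) w‖ ≤ L / p ! * ‖w - z‖ ^ p := by
  obtain ⟨q, rfl⟩ := Nat.exists_eq_add_of_le' hp
  rw [(hasFDerivAt_taylorPolynomial_succ (mod_cast hg.contDiffAt) w).fderiv]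
  simp only [← norm_iteratedFDeriv_fderiv_sub] at hLip
  exact norm_sub_taylorPolynomial_le (hg.fderiv_right (by norm_cast)) hLip w

section BlockGradients

open WithLp

theorem norm_gradient_comp_sub_gradient_comp_le {G E : Type*} [NormedAddCommGroup G]
    [InnerProductSpace ℝ G] [CompleteSpace G] [NormedAddCommGroup E] [NormedSpace ℝ E]
    {f₁ f₂ : E → ℝ} {c : G → E} {u : G} (hf₁ : DifferentiableAt ℝ f₁ (c u))
    (hf₂ : DifferentiableAt ℝ f₂ (c u)) (hc : DifferentiableAt ℝ c u) (hc_lip : LipschitzWith 1 c) :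
    ‖∇ (f₁ ∘ c) u - ∇ (f₂ ∘ c) u‖ ≤ ‖fderiv ℝ f₁ (c u) - fderiv ℝ f₂ (c u)‖ :=
  calc ‖∇ (f₁ ∘ c) u - ∇ (f₂ ∘ c) u‖
      = ‖(fderiv ℝ f₁ (c u) - fderiv ℝ f₂ (c u)) ∘L fderiv ℝ c u‖ := by
        rw [← (InnerProductSpace.toDual ℝ G).norm_map, map_sub, toDual_gradient, toDual_gradient,
          fderiv_comp u hf₁ hc, fderiv_comp u hf₂ hc, ContinuousLinearMap.sub_comp]
    _ ≤ ‖fderiv ℝ f₁ (c u) - fderiv ℝ f₂ (c u)‖ * ‖fderiv ℝ c u‖ :=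
        ContinuousLinearMap.opNorm_comp_le _ _
    _ ≤ ‖fderiv ℝ f₁ (c u) - fderiv ℝ f₂ (c u)‖ :=
        mul_le_of_le_one_right (norm_nonneg _) (norm_fderiv_le_of_lipschitz ℝ hc_lip)

theorem isometry_toLp_prodMk_left {X Y : Type*} [SeminormedAddCommGroup X]
    [SeminormedAddCommGroup Y] (p : ℝ≥0∞) [Fact (1 ≤ p)] (y : Y) :
    Isometry fun x : X ↦ toLp p (x, y) :=
  Isometry.of_dist_eq fun x x' ↦ by
    rw [dist_eq_norm, dist_eq_norm, ← toLp_sub, Prod.mk_sub_mk, sub_self, norm_toLp_fst]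

theorem isometry_toLp_prodMk_right {X Y : Type*} [SeminormedAddCommGroup X]
    [SeminormedAddCommGroup Y] (p : ℝ≥0∞) [Fact (1 ≤ p)] (x : X) :
    Isometry fun y : Y ↦ toLp p (x, y) :=
  Isometry.of_dist_eq fun y y' ↦ by
    rw [dist_eq_norm, dist_eq_norm, ← toLp_sub, Prod.mk_sub_mk, sub_self, norm_toLp_snd]

theorem taylor_gradient_remainder_bound_general {X Y : Type*}
    [NormedAddCommGroup X] [InnerProductSpace ℝ X] [CompleteSpace X]
    [NormedAddCommGroup Y] [InnerProductSpace ℝ Y] [CompleteSpace Y]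
    {p : ℕ} (hp : 1 ≤ p) {g : WithLp 2 (X × Y) → ℝ} (hg : ContDiff ℝ p g)
    {z : WithLp 2 (X × Y)} {L : ℝ}
    (hLip : ∀ w, ‖iteratedFDeriv ℝ p g w - iteratedFDeriv ℝ p g z‖ ≤ L * ‖w - z‖) (x : X) (y : Y) :
    ‖∇ (fun x' ↦ g (toLp 2 (x', y))) x -
        ∇ (fun x' ↦ taylorPolynomial ℝ p g z (toLp 2 (x', y))) x‖
          ≤ L / p ! * ‖toLp 2 (x, y) - z‖ ^ p ∧
      ‖∇ (fun y' ↦ g (toLp 2 (x, y'))) y -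
        ∇ (fun y' ↦ taylorPolynomial ℝ p g z (toLp 2 (x, y'))) y‖
          ≤ L / p ! * ‖toLp 2 (x, y) - z‖ ^ p := by
  have hg_diff : Differentiable ℝ g := hg.differentiable (by norm_cast; omega)
  have hpoly_diff : Differentiable ℝ (taylorPolynomial ℝ p g z) := differentiable_taylorPolynomial
  have hx_diff : Differentiable ℝ fun x' : X ↦ toLp 2 (x', y) :=
    (contDiff_toLp.comp (contDiff_prodMk_left y)).differentiable one_ne_zero
  have hy_diff : Differentiable ℝ fun y' : Y ↦ toLp 2 (x, y') :=
    (contDiff_toLp.comp (contDiff_prodMk_right x)).differentiable one_ne_zero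
  have hbound := norm_fderiv_sub_fderiv_taylorPolynomial_le hp hg hLip (toLp 2 (x, y))
  constructor
  · exact (norm_gradient_comp_sub_gradient_comp_le (hg_diff _) (hpoly_diff _) (hx_diff x)
      (isometry_toLp_prodMk_left 2 y).lipschitz).trans hbound
  · exact (norm_gradient_comp_sub_gradient_comp_le (hg_diff _) (hpoly_diff _) (hy_diff y)
      (isometry_toLp_prodMk_right 2 x).lipschitz).trans hbound

end BlockGradients

theorem le_mul_div_mul_of_one_le {a b c r L : ℝ} (ha : 0 ≤ a) (hb : 1 ≤ b) (h : a ≤ L / c * r) :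
    a ≤ L * b / c * r :=
  calc a ≤ L / c * r := h
    _ ≤ L / c * r * b := le_mul_of_one_le_right (ha.trans h) hb
    _ = L * b / c * r := by ring

/-- Case `n = p − 1` of Lemma 3 of the paper: if the `p`-th derivative of `g` is
`L_p`-Lipschitz, then the block gradients of `g` and of its `p`-th order Taylor polynomial
`Φ_{z,p}` differ by at most `(L_p (√2)^{p−1}/p!) ‖ẑ − z‖^p`. -/
theorem taylor_gradient_remainder_bound {n m : ℕ} (p : ℕ) (hp : 1 ≤ p) (Lp : ℝ)
    (g : WithLp 2 (EuclideanSpace ℝ (Fin n) × EuclideanSpace ℝ (Fin m)) → ℝ)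
    (hg : ContDiff ℝ (p : ℕ∞) g)
    (hLip : ∀ z₁ z₂, ‖iteratedFDeriv ℝ p g z₁ - iteratedFDeriv ℝ p g z₂‖ ≤ Lp * ‖z₁ - z₂‖) :
    ∀ (x xh : EuclideanSpace ℝ (Fin n)) (y yh : EuclideanSpace ℝ (Fin m)),
      ‖gradXZ g xh yh - gradXZ (taylorPoly p g (mkZ x y)) xh yh‖
          ≤ Lp * Real.sqrt 2 ^ (p - 1) / (Nat.factorial p : ℝ) * ‖mkZ xh yh - mkZ x y‖ ^ p ∧
      ‖gradYZ g xh yh - gradYZ (taylorPoly p g (mkZ x y)) xh yh‖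
          ≤ Lp * Real.sqrt 2 ^ (p - 1) / (Nat.factorial p : ℝ) * ‖mkZ xh yh - mkZ x y‖ ^ p := by
  intro x xh y yh
  have hbound := taylor_gradient_remainder_bound_general hp hg (fun w ↦ hLip w (mkZ x y)) xh yh
  have hsqrt : 1 ≤ √2 ^ (p - 1) := one_le_pow₀ (Real.one_le_sqrt.2 one_le_two)
  rw [taylorPoly_eq_taylorPolynomial]
  exact hbound.imp (le_mul_div_mul_of_one_le (norm_nonneg _) hsqrt)
    (le_mul_div_mul_of_one_le (norm_nonneg _) hsqrt)
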